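/- arXiv:2105.10766 — 5 statements merged into one kernel-verified Lean document; each statement's English description precedes it below -/
import Mathlib

section
/- g has the unique solution property (USP) if and only if X_0(ū) is a singleton subset of X for every input ū ∈ U^ℤ. -/
open Metric Set Filter Topology Function

universe u' v'

variable {U : Type u'} {X : Type v'}

/-- `proc g u j m x = φ_ū(m+j, m, x)`: apply `g_{u m}, g_{u (m+1)}, …, g_{u (m+j-1)}`
to `x`, in that order. -/
def proc (g : U → X → X) (u : ℤ → U) : ℕ → ℤ → X → X
  | 0, _, x => x
  | j + 1, m, x => g (u (m + j)) (proc g u j m x)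

/-- A solution of the driven system `g` for the input `u`. -/
def IsSolution (g : U → X → X) (u : ℤ → U) (x : ℤ → X) : Prop :=
  ∀ n : ℤ, x (n + 1) = g (u n) (x n)

/-- The unique solution property: every input has exactly one solution. -/
def USP (g : U → X → X) : Prop :=
  ∀ u : ℤ → U, ∃! x : ℤ → X, IsSolution g u x

/-- The set of reachable states at time `n`: `X_n(ū) = ⋂_{j ≥ 1} φ_ū(n, n - j, X)`. -/
def reach (g : U → X → X) (u : ℤ → U) (n : ℤ) : Set X :=
  ⋂ j : ℕ, Set.range (proc g u (j + 1) (n - (j + 1)))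

/-- The reachable set `X_U = ⋃ {X_n(ū) : n ∈ ℤ, ū ∈ U^ℤ}`. -/
def reachSet (g : U → X → X) : Set X :=
  ⋃ u : ℤ → U, ⋃ n : ℤ, reach g u n

/-- The left-infinite part `←u^n = (…, u_{n-2}, u_{n-1})` of an input `u`;
coordinate `k : ℕ` corresponds to time `n - 1 - k` (so `0` is the most recent one). -/
def leftOf (u : ℤ → U) (n : ℤ) : ℕ → U := fun k => u (n - 1 - (k : ℤ))

/-- The right-shift map `r : (…, u_{-2}, u_{-1}) ↦ (…, u_{-3}, u_{-2})`. -/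
def shift (w : ℕ → U) : ℕ → U := fun k => w (k + 1)

/-- The concatenation map `σ_v : (…, u_{-2}, u_{-1}) ↦ (…, u_{-2}, u_{-1}, v)`. -/
def append (v : U) (w : ℕ → U) : ℕ → U := fun k => Nat.casesOn k v w

/-- `encProc g w j = φ_ū(0, -j, ·)` for any input `ū` whose left-infinite part is `w`. -/
def encProc (g : U → X → X) : (ℕ → U) → ℕ → X → X
  | _, 0, x => x
  | w, j + 1, x => g (w 0) (encProc g (shift w) j x)

/-- The encoding map `E(←u) = X_0(ū) = ⋂_{j ≥ 1} φ_ū(0, -j, X)`. -/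
def enc (g : U → X → X) (w : ℕ → U) : Set X :=
  ⋂ j : ℕ, Set.range (encProc g w (j + 1))

/-- The map `g̃_v : (…, x_{-2}, x_{-1}) ↦ (…, x_{-2}, x_{-1}, g(v, x_{-1}))`. -/
def tildeg (g : U → X → X) (v : U) (x : ℕ → X) : ℕ → X :=
  fun k => Nat.casesOn k (g v (x 0)) x

/-- The Hausdorff semi-distance `dist(A, B) = sup_{a ∈ A} inf_{b ∈ B} d(a, b)`. -/
noncomputable def semiDist [MetricSpace X] (A B : Set X) : ℝ :=
  sSup ((fun a => Metric.infDist a B) '' A)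

/-!
The states reachable at time `n` are exactly the values at time `n` of solutions. Indeed, a
reachable state `a` is hit at time `n` by trajectories that start arbitrarily far in the past. In
the compact space `ℤ → X`, the sequences `x` with `x n = a` that satisfy the equation from time
`n - (j + 1)` on form a decreasing sequence, in `j`, of nonempty closed sets, and any common point
is a solution through `a`. Translating the input in time then reduces `X_n` to `X_0`.
-/

/-- The condition `x_{n+1} = g(u_n, x_n)` of a solution for the input `u`, required only from
time `m` on. The entries of `x` before time `m` are arbitrary, which keeps all these conditions on
the same space `ℤ → X`. -/
def IsSolutionFrom (g : U → X → X) (u : ℤ → U) (m : ℤ) (x : ℤ → X) : Prop :=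
  ∀ n : ℤ, m ≤ n → x (n + 1) = g (u n) (x n)

section Trajectories

variable {g : U → X → X} {u : ℤ → U} {x : ℤ → X}

theorem proc_comp_add_right (c : ℤ) (j : ℕ) (m : ℤ) (z : X) :
    proc g (fun k => u (k + c)) j m z = proc g u j (m + c) z := by
  induction j with
  | zero => rfl
  | succ j ih => simp only [proc, ih, add_right_comm]

theorem reach_comp_add_right (c n : ℤ) :
    reach g (fun k => u (k + c)) n = reach g u (n + c) := by
  simp only [reach, funext (proc_comp_add_right c _ _), sub_add_eq_add_sub]

theorem IsSolution.proc_apply (hx : IsSolution g u x) (j : ℕ) (m : ℤ) :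
    proc g u j m (x m) = x (m + j) := by
  induction j with
  | zero => simp only [proc, Nat.cast_zero, add_zero]
  | succ j ih => rw [proc, ih, ← hx, Nat.cast_succ, add_assoc]

theorem IsSolution.mem_reach (hx : IsSolution g u x) (n : ℤ) : x n ∈ reach g u n := by
  refine mem_iInter.2 fun j => ⟨x (n - (j + 1)), ?_⟩
  rw [hx.proc_apply, Nat.cast_succ, sub_add_cancel]

theorem isSolution_iff_forall_isSolutionFrom (n : ℤ) :
    IsSolution g u x ↔ ∀ j : ℕ, IsSolutionFrom g u (n - (j + 1)) x :=
  ⟨fun hx _ k _ => hx k, fun hx k => hx (n - k).natAbs k (by lia)⟩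

theorem IsSolutionFrom.mono {m m' : ℤ} (hx : IsSolutionFrom g u m x) (hm : m ≤ m') :
    IsSolutionFrom g u m' x :=
  fun n hn => hx n (hm.trans hn)

theorem isSolutionFrom_proc (m : ℤ) (z : X) :
    IsSolutionFrom g u m fun n => proc g u (n - m).toNat m z := by
  intro n hn
  have elapsed_succ : (n + 1 - m).toNat = (n - m).toNat + 1 := by lia
  have add_elapsed : m + ((n - m).toNat : ℤ) = n := by lia
  simp only [elapsed_succ, proc, add_elapsed]

theorem exists_isSolutionFrom_of_mem_reach {n : ℤ} {a : X} (ha : a ∈ reach g u n) (j : ℕ) :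
    ∃ x, IsSolutionFrom g u (n - (j + 1)) x ∧ x n = a := by
  obtain ⟨z, hz⟩ := mem_iInter.1 ha j
  have elapsed : (n - (n - ((j : ℤ) + 1))).toNat = j + 1 := by lia
  exact ⟨_, isSolutionFrom_proc _ z, by simpa only [elapsed] using hz⟩

end Trajectories

section Compactness

variable [TopologicalSpace X] [T2Space X] {g : U → X → X}

theorem isClosed_setOf_isSolutionFrom (hg : ∀ v, Continuous (g v)) (u : ℤ → U) (m : ℤ) :
    IsClosed {x | IsSolutionFrom g u m x} := by
  simp only [IsSolutionFrom, ofPred_forall]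
  exact isClosed_iInter fun n => isClosed_iInter fun _ =>
    isClosed_eq (continuous_apply (n + 1)) ((hg (u n)).comp (continuous_apply n))

theorem exists_isSolution_of_mem_reach [CompactSpace X] (hg : ∀ v, Continuous (g v))
    {u : ℤ → U} {n : ℤ} {a : X} (ha : a ∈ reach g u n) : ∃ x, IsSolution g u x ∧ x n = a := by
  let S : ℕ → Set (ℤ → X) := fun j => {x | IsSolutionFrom g u (n - (j + 1)) x} ∩ {x | x n = a}
  have S_closed (j : ℕ) : IsClosed (S j) :=
    (isClosed_setOf_isSolutionFrom hg u _).inter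
      (isClosed_eq (continuous_apply n) continuous_const)
  have S_antitone (j : ℕ) : S (j + 1) ⊆ S j :=
    inter_subset_inter_left _ fun x hx => hx.mono (by lia)
  obtain ⟨x, hx⟩ : (⋂ j, S j).Nonempty :=
    IsCompact.nonempty_iInter_of_sequence_nonempty_isCompact_isClosed S S_antitone
      (exists_isSolutionFrom_of_mem_reach ha) (S_closed 0).isCompact S_closed
  rw [mem_iInter] at hx
  exact ⟨x, (isSolution_iff_forall_isSolutionFrom n).2 fun j => (hx j).1, (hx 0).2⟩

theorem reach_eq_image_isSolution [CompactSpace X] (hg : ∀ v, Continuous (g v)) (u : ℤ → U)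
    (n : ℤ) : reach g u n = eval n '' {x | IsSolution g u x} := by
  ext a
  refine ⟨exists_isSolution_of_mem_reach hg, ?_⟩
  rintro ⟨x, hx, rfl⟩
  exact hx.mem_reach n

theorem existsUnique_isSolution_iff [CompactSpace X] (hg : ∀ v, Continuous (g v)) (u : ℤ → U) :
    (∃! x, IsSolution g u x) ↔ ∀ n, ∃ a, reach g u n = {a} := by
  simp only [reach_eq_image_isSolution hg]
  constructor
  · intro h n
    obtain ⟨x, hx⟩ : ∃ x, {x | IsSolution g u x} = {x} := singleton_iff_unique_mem.2 h
    exact ⟨x n, by rw [hx, image_singleton, eval]⟩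
  · intro h
    choose a ha using h
    have apply_eq {x : ℤ → X} (hx : IsSolution g u x) (n : ℤ) : x n = a n :=
      mem_singleton_iff.1 (ha n ▸ mem_image_of_mem (eval n) hx)
    obtain ⟨x, hx, -⟩ : a 0 ∈ eval 0 '' {x | IsSolution g u x} := ha 0 ▸ mem_singleton (a 0)
    exact ⟨x, hx, fun y hy => funext fun n => (apply_eq hy n).trans (apply_eq hx n).symm⟩

theorem stmt_1_general [CompactSpace X] (hg : ∀ v, Continuous (g v)) :
    USP g ↔ ∀ u : ℤ → U, ∃ x : X, reach g u 0 = {x} := by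
  simp only [USP, existsUnique_isSolution_iff hg]
  refine ⟨fun h u => h u 0, fun h u n => ?_⟩
  simpa only [reach_comp_add_right, zero_add] using h fun k => u (k + n)

end Compactness

/-- `g` has the USP iff `X_0(ū)` is a singleton subset of `X` for every input. -/
theorem stmt_1 [MetricSpace X] [CompactSpace X] [MetricSpace U]
    (g : U → X → X) (hg : Continuous fun p : U × X => g p.1 p.2) :
    USP g ↔ ∀ u : ℤ → U, ∃ x : X, reach g u 0 = {x} := by
  exact stmt_1_general fun v => hg.comp (Continuous.prodMk_right v)
end

section
/- The encoding map E : ←U → H_X is upper semicontinuous: for every ←u ∈ ←U and every open set V ⊆ X with E(←u) ⊆ V, there exists an open neighborhood W of ←u in ←U such that E(←v) ⊆ V for every ←v ∈ W. -/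
open Metric Set Filter Topology Function

universe u' v'

variable {U : Type u'} {X : Type v'}

/-!
The sets `φ_ū(0, -j, X)` decrease with `j`, since a longer past only composes with more maps on the
right, and they are compact; so if their intersection lies in an open set `V`, then already one of
them does. That single set involves only finitely many inputs and depends on them upper
hemicontinuously by the tube lemma, so it stays inside `V` under small changes of the input.
-/

section Hemicontinuity

variable {α β γ : Type*} [TopologicalSpace α] [TopologicalSpace β] [TopologicalSpace γ] {a : α}

theorem upperHemicontinuousAt_image_of_isCompact {f : α → β → γ} {K : Set β} (hK : IsCompact K)
    (hf : ∀ y ∈ K, ContinuousAt (uncurry f) (a, y)) :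
    UpperHemicontinuousAt (fun x => f x '' K) a := by
  refine .of_forall_isOpen fun V hV hsub => ?_
  have near_each_point : ∀ y ∈ K, ∀ᶠ p : α × β in 𝓝 (a, y), f p.1 p.2 ∈ V := fun y hy =>
    (hf y hy).eventually (hV.mem_nhds (hsub (mem_image_of_mem _ hy)))
  exact (hK.eventually_forall_of_forall_eventually near_each_point).mono fun _ hx =>
    image_subset_iff.2 hx

theorem upperHemicontinuousAt_iInter_of_directed {ι : Type*} [Nonempty ι] [T2Space β]
    {F : ι → α → Set β} (hdir : Directed (· ⊇ ·) fun i => F i a)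
    (hcompact : ∀ i, IsCompact (F i a)) (hF : ∀ i, UpperHemicontinuousAt (F i) a) :
    UpperHemicontinuousAt (fun x => ⋂ i, F i x) a := by
  refine .of_forall_isOpen fun V hV hsub => ?_
  obtain ⟨i, hi⟩ : ∃ i, F i a ⊆ V :=
    exists_subset_nhds_of_isCompact hdir hcompact fun y hy => hV.mem_nhds (hsub hy)
  exact ((hF i).forall_isOpen V hV hi).mono fun x hx => (iInter_subset _ i).trans hx

end Hemicontinuity

theorem encProc_succ_apply (g : U → X → X) (w : ℕ → U) (j : ℕ) (x : X) :
    encProc g w (j + 1) x = encProc g w j (g (w j) x) := by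
  induction j generalizing w with
  | zero => rfl
  | succ j ih => exact congrArg (g (w 0)) (ih (shift w))

theorem antitone_range_encProc (g : U → X → X) (w : ℕ → U) :
    Antitone fun j => range (encProc g w j) := by
  refine antitone_nat_of_succ_le fun j => ?_
  rintro _ ⟨x, rfl⟩
  exact ⟨g (w j) x, (encProc_succ_apply g w j x).symm⟩

section Continuity

variable [TopologicalSpace U]

theorem continuous_shift : Continuous (shift : (ℕ → U) → ℕ → U) :=
  continuous_pi fun k => continuous_apply (k + 1)

variable [TopologicalSpace X] {g : U → X → X}

theorem continuous_uncurry_encProc (hg : Continuous fun p : U × X => g p.1 p.2) (j : ℕ) :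
    Continuous fun p : (ℕ → U) × X => encProc g p.1 j p.2 := by
  induction j with
  | zero => exact continuous_snd
  | succ j ih =>
    have latest_input : Continuous fun p : (ℕ → U) × X => p.1 0 := by fun_prop
    have earlier_inputs : Continuous fun p : (ℕ → U) × X => (shift p.1, p.2) :=
      continuous_shift.prodMap continuous_id
    exact hg.comp (latest_input.prodMk (ih.comp earlier_inputs))

theorem continuous_encProc (hg : Continuous fun p : U × X => g p.1 p.2) (w : ℕ → U) (j : ℕ) :
    Continuous (encProc g w j) :=
  (continuous_uncurry_encProc hg j).comp (.prodMk_right w)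

theorem upperHemicontinuous_range_encProc [CompactSpace X]
    (hg : Continuous fun p : U × X => g p.1 p.2) (j : ℕ) :
    UpperHemicontinuous fun w => range (encProc g w j) := by
  intro w
  simpa only [image_univ] using upperHemicontinuousAt_image_of_isCompact isCompact_univ
    fun x _ => (continuous_uncurry_encProc hg j).continuousAt (x := (w, x))

end Continuity

theorem stmt_2_general [TopologicalSpace U] [TopologicalSpace X] [CompactSpace X] [T2Space X]
    {g : U → X → X} (hg : Continuous fun p : U × X => g p.1 p.2) :
    UpperHemicontinuous (enc g) := by
  intro w
  have decreasing : Antitone fun j => range (encProc g w (j + 1)) := fun _ _ hij =>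
    antitone_range_encProc g w (Nat.succ_le_succ hij)
  exact upperHemicontinuousAt_iInter_of_directed decreasing.directed_ge
    (fun j => isCompact_range (continuous_encProc hg w (j + 1)))
    (fun j => upperHemicontinuous_range_encProc hg (j + 1) w)

/-- the encoding map `E` is upper semicontinuous. -/
theorem stmt_2 [MetricSpace X] [CompactSpace X] [MetricSpace U]
    (g : U → X → X) (hg : Continuous fun p : U × X => g p.1 p.2)
    (w : ℕ → U) (V : Set X) (hV : IsOpen V) (hEV : enc g w ⊆ V) :
    ∃ W : Set (ℕ → U), IsOpen W ∧ w ∈ W ∧ ∀ w' ∈ W, enc g w' ⊆ V := by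
  exact ⟨enc g ⁻¹' Iic V, upperHemicontinuous_iff_isOpen_preimage_Iic.1 (stmt_2_general hg) V hV,
    hEV, fun _ hw' => hw'⟩
end

section
/- For every input ū ∈ U^ℤ and every n ∈ ℤ, ⋂_{j≥1} φ_ū(n,n−j,X) = ⋂_{j≥1} φ_ū(n,n−j,X_U). -/
open Metric Set Filter Topology Function

universe u' v'

variable {U : Type u'} {X : Type v'}

/-!
The reachable sets of a fixed input are carried *onto* each other by the process: `φ_ū(n, m, ·)`
maps `X_m(ū)` onto `X_n(ū)`, because on a compact space continuous images commute with
intersections of decreasing closed sets. Hence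
`X_n(ū) = φ_ū(n, n-j, X_{n-j}(ū)) ⊆ φ_ū(n, n-j, X_U)` for every `j ≥ 1`, and conversely
`φ_ū(n, n-j, X_U) ⊆ φ_ū(n, n-j, X)`.
-/

theorem image_iInter_eq_of_directed_isCompact_isClosed {ι Y Z : Type*} [Nonempty ι]
    [TopologicalSpace Y] [TopologicalSpace Z] [T1Space Z] {f : Y → Z} (hf : Continuous f)
    {s : ι → Set Y} (hs : Directed (· ⊇ ·) s) (hs_compact : ∀ i, IsCompact (s i))
    (hs_closed : ∀ i, IsClosed (s i)) : f '' ⋂ i, s i = ⋂ i, f '' s i := by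
  refine (image_iInter_subset s f).antisymm fun z hz => ?_
  have fiber_closed : IsClosed (f ⁻¹' {z}) := isClosed_singleton.preimage hf
  have fiber_meets (i : ι) : (s i ∩ f ⁻¹' {z}).Nonempty := mem_iInter.1 hz i
  have fibers_directed : Directed (· ⊇ ·) fun i => s i ∩ f ⁻¹' {z} := fun i j =>
    (hs i j).imp fun _ => .imp (inter_subset_inter_left _) (inter_subset_inter_left _)
  obtain ⟨y, hy⟩ : (⋂ i, s i ∩ f ⁻¹' {z}).Nonempty :=
    IsCompact.nonempty_iInter_of_directed_nonempty_isCompact_isClosed _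
      fibers_directed fiber_meets
      (fun i => (hs_compact i).inter_right fiber_closed)
      (fun i => (hs_closed i).inter fiber_closed)
  rw [← iInter_inter] at hy
  exact ⟨y, hy⟩

section Reach

variable (g : U → X → X) (u : ℤ → U)

theorem proc_add (i j : ℕ) (m : ℤ) (x : X) :
    proc g u (i + j) m x = proc g u j (m + i) (proc g u i m x) := by
  induction j with
  | zero => rfl
  | succ j ih => rw [← Nat.add_assoc, proc, proc, ih, Nat.cast_add, Int.add_assoc]

theorem image_range_proc (i j : ℕ) (m : ℤ) :
    proc g u j m '' range (proc g u i (m - i)) =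
      range (proc g u (i + j) (m + j - (i + j : ℕ))) := by
  have start_eq : m + j - (i + j : ℕ) = m - i := by push_cast; ring
  rw [← range_comp, start_eq]
  congr 1
  ext x
  rw [proc_add, sub_add_cancel, comp_apply]

theorem antitone_range_proc (n : ℤ) : Antitone fun j : ℕ => range (proc g u j (n - j)) := by
  refine antitone_nat_of_succ_le fun j => range_subset_iff.2 fun x => ?_
  have start_add_one : n - (j + 1 : ℕ) + (1 : ℕ) = n - j := by push_cast; ring
  rw [Nat.add_comm j 1, proc_add, Nat.add_comm 1 j, start_add_one]
  exact mem_range_self _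

theorem iInter_range_proc_add (n : ℤ) (k : ℕ) :
    ⋂ j : ℕ, range (proc g u (j + k) (n - (j + k : ℕ))) = ⋂ j : ℕ, range (proc g u j (n - j)) :=
  (antitone_range_proc g u n).iInf_nat_add k

theorem reach_eq_iInter_range_proc (n : ℤ) :
    reach g u n = ⋂ j : ℕ, range (proc g u j (n - j)) := by
  simpa only [reach, Nat.cast_add_one] using iInter_range_proc_add g u n 1

theorem reach_subset_reachSet (n : ℤ) : reach g u n ⊆ reachSet g :=
  subset_iUnion₂ (s := fun u n => reach g u n) u n

end Reach

section Continuous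

variable [TopologicalSpace X] {g : U → X → X} {u : ℤ → U}

theorem continuous_proc (hg : ∀ k, Continuous (g (u k))) (j : ℕ) (m : ℤ) :
    Continuous (proc g u j m) := by
  induction j with
  | zero => exact continuous_id
  | succ j ih => exact (hg _).comp ih

theorem image_proc_reach [CompactSpace X] [T2Space X] (hg : ∀ k, Continuous (g (u k)))
    (j : ℕ) (m : ℤ) : proc g u j m '' reach g u m = reach g u (m + j) := by
  have range_compact (i : ℕ) : IsCompact (range (proc g u i (m - i))) :=
    isCompact_range (continuous_proc hg i _)
  calc proc g u j m '' reach g u m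
      = ⋂ i : ℕ, proc g u j m '' range (proc g u i (m - i)) := by
        rw [reach_eq_iInter_range_proc]
        exact image_iInter_eq_of_directed_isCompact_isClosed (continuous_proc hg j m)
          (antitone_range_proc g u m).directed_ge range_compact
          fun i => (range_compact i).isClosed
    _ = ⋂ i : ℕ, range (proc g u (i + j) (m + j - (i + j : ℕ))) :=
        iInter_congr fun i => image_range_proc g u i j m
    _ = reach g u (m + j) := by
        rw [iInter_range_proc_add, ← reach_eq_iInter_range_proc]

end Continuous

theorem stmt_8_general [TopologicalSpace X] [CompactSpace X] [T2Space X] (g : U → X → X)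
    (u : ℤ → U) (hg : ∀ k, Continuous (g (u k))) (n : ℤ) :
    (⋂ j : ℕ, range (proc g u (j + 1) (n - (j + 1)))) =
      ⋂ j : ℕ, proc g u (j + 1) (n - (j + 1)) '' reachSet g := by
  refine (subset_iInter fun j => ?_).antisymm (iInter_mono fun j => image_subset_range _ _)
  calc reach g u n
      = proc g u (j + 1) (n - (j + 1)) '' reach g u (n - (j + 1)) := by
        rw [image_proc_reach hg, Nat.cast_add_one, sub_add_cancel]
    _ ⊆ proc g u (j + 1) (n - (j + 1)) '' reachSet g := image_mono (reach_subset_reachSet g u _)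

/-- `⋂_{j ≥ 1} φ_ū(n, n-j, X) = ⋂_{j ≥ 1} φ_ū(n, n-j, X_U)`. -/
theorem stmt_8 [MetricSpace X] [CompactSpace X] [MetricSpace U]
    (g : U → X → X) (hg : Continuous fun p : U × X => g p.1 p.2)
    (u : ℤ → U) (n : ℤ) :
    (⋂ j : ℕ, Set.range (proc g u (j + 1) (n - (j + 1)))) =
      ⋂ j : ℕ, proc g u (j + 1) (n - (j + 1)) '' reachSet g :=
  stmt_8_general g u (fun k => hg.comp (.prodMk_right (u k))) n
end

section
/- Let g be a compactly driven system and let h : ←U → X_U be a surjective map (not assumed continuous) satisfying g(v, h(←u)) = h(σ_v(←u)) for all v ∈ U and all ←u ∈ ←U. If g does not have the USP, then h is not continuous. Equivalently, if such a surjective commuting map h is continuous, then g has the USP. -/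
open Metric Set Filter Topology Function

universe u' v'

variable {U : Type u'} {X : Type v'}

/-!
Set `ξ n = h (leftOf u n)`; the commutation relation says exactly that `ξ` solves the input `u`.
Conversely let `x` be any solution. Its states are reachable, so `x (n - j) = h w` for some `w`
which may have nothing to do with `u`; but pushing this equation forward `j` steps gives
`x n = h w'` where the `j` most recent entries of `w'` are those of `u`. Letting `j → ∞`, the
sequences `w'` converge to `leftOf u n`, and continuity of `h` forces `x n = ξ n`.
-/

open PiNat (cylinder)

theorem tendsto_of_forall_mem_cylinder {E : ℕ → Type*} [∀ k, TopologicalSpace (E k)]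
    {a : ∀ k, E k} {w : ℕ → ∀ k, E k} (hw : ∀ j, w j ∈ cylinder a j) :
    Tendsto w atTop (𝓝 a) := by
  refine tendsto_pi_nhds.2 fun k => tendsto_const_nhds.congr' ?_
  filter_upwards [eventually_gt_atTop k] with j hkj
  exact (hw j k hkj).symm

theorem eq_of_forall_mem_image_cylinder {E : ℕ → Type*} [∀ k, TopologicalSpace (E k)]
    {Y : Type*} [TopologicalSpace Y] [T1Space Y] {f : (∀ k, E k) → Y} {a : ∀ k, E k} {y : Y}
    (hf : ContinuousAt f a) (hy : ∀ j, y ∈ f '' cylinder a j) : y = f a := by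
  choose w hwa hwy using hy
  have hlim : Tendsto (f ∘ w) atTop (𝓝 (f a)) :=
    hf.tendsto.comp (tendsto_of_forall_mem_cylinder hwa)
  have hconst : f ∘ w = fun _ => y := funext hwy
  rwa [hconst, tendsto_const_nhds_iff] at hlim

theorem append_mem_cylinder {w a : ℕ → U} {j : ℕ} (hw : w ∈ cylinder a j) (v : U) :
    append v w ∈ cylinder (append v a) (j + 1)
  | 0, _ => rfl
  | k + 1, hk => hw k (Nat.lt_of_succ_lt_succ hk)

theorem append_leftOf (u : ℤ → U) (n : ℤ) : append (u n) (leftOf u n) = leftOf u (n + 1) := by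
  funext k
  cases k with
  | zero => simp [append, leftOf]
  | succ k =>
    simp only [append, leftOf]
    congr 1
    push_cast
    ring

section

variable {g : U → X → X} {u : ℤ → U} {x : ℤ → X} {h : (ℕ → U) → X}

namespace IsSolution

theorem proc_apply_s10 (hx : IsSolution g u x) (j : ℕ) (m : ℤ) :
    proc g u j m (x m) = x (m + j) := by
  induction j with
  | zero => simp [proc]
  | succ j ih => rw [proc, ih, ← hx, Nat.cast_succ, add_assoc]

theorem mem_reach_s10 (hx : IsSolution g u x) (n : ℤ) : x n ∈ reach g u n :=
  mem_iInter.2 fun j => ⟨x (n - (j + 1)), by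
    rw [hx.proc_apply_s10, Nat.cast_succ, sub_add_cancel]⟩

theorem mem_reachSet (hx : IsSolution g u x) (n : ℤ) : x n ∈ reachSet g :=
  mem_iUnion₂.2 ⟨u, n, hx.mem_reach_s10 n⟩

theorem mem_image_cylinder_leftOf (hx : IsSolution g u x) (hsurj : reachSet g ⊆ range h)
    (hcomm : ∀ (v : U) (w : ℕ → U), g v (h w) = h (append v w)) (j : ℕ) (n : ℤ) :
    x n ∈ h '' cylinder (leftOf u n) j := by
  induction j generalizing n with
  | zero => simpa only [PiNat.cylinder_zero, image_univ] using hsurj (hx.mem_reachSet n)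
  | succ j ih =>
    obtain ⟨m, rfl⟩ : ∃ m, n = m + 1 := ⟨n - 1, (sub_add_cancel n 1).symm⟩
    obtain ⟨w, hw, hwx⟩ := ih m
    refine ⟨append (u m) w, ?_, ?_⟩
    · rw [← append_leftOf]
      exact append_mem_cylinder hw (u m)
    · rw [← hcomm, hwx, hx m]

end IsSolution

theorem isSolution_comp_leftOf
    (hcomm : ∀ (v : U) (w : ℕ → U), g v (h w) = h (append v w)) (u : ℤ → U) :
    IsSolution g u (h ∘ leftOf u) := fun n => by
  simp only [comp_apply, hcomm, append_leftOf]

theorem stmt_10_general [TopologicalSpace X] [T1Space X] [TopologicalSpace U]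
    (hsurj : reachSet g ⊆ range h)
    (hcomm : ∀ (v : U) (w : ℕ → U), g v (h w) = h (append v w)) (hcont : Continuous h) :
    USP g := by
  intro u
  refine ⟨h ∘ leftOf u, isSolution_comp_leftOf hcomm u, fun x hx => funext fun n => ?_⟩
  exact eq_of_forall_mem_image_cylinder hcont.continuousAt
    fun j => hx.mem_image_cylinder_leftOf hsurj hcomm j n

end

/-- if `h : ←U → X_U` is surjective (not assumed continuous) and satisfies
`g(v, h(←u)) = h(σ_v(←u))` for all `v, ←u`, and `g` does not have the USP, then `h` is
not continuous. -/
theorem stmt_10 [MetricSpace X] [CompactSpace X] [MetricSpace U] [CompactSpace U]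
    (g : U → X → X) (hg : Continuous fun p : U × X => g p.1 p.2)
    (h : (ℕ → U) → X) (hsurj : Set.range h = reachSet g)
    (hcomm : ∀ (v : U) (w : ℕ → U), g v (h w) = h (append v w))
    (hnusp : ¬ USP g) :
    ¬ Continuous h :=
  fun hcont => hnusp (stmt_10_general hsurj.superset hcomm hcont)
end

section
/- Let g be a driven system with the USP and suppose X contains more than one point. Then for no u ∈ U is the map g(u,·) : X → X surjective. -/
open Metric Set Filter Topology Function

universe u' v'

variable {U : Type u'} {X : Type v'}

/-!
If every map before some time `m` is surjective, a state at time `m` can be pulled back along chosen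
preimages and pushed forward by the dynamics, so each state at time `m` lies on a solution. Two
distinct states then give two distinct solutions.
-/

lemma exists_isSolution_apply_eq_of_surjective {g : U → X → X} {u : ℤ → U} {m : ℤ}
    (hsurj : ∀ n < m, Surjective (g (u n))) (a : X) :
    ∃ x : ℤ → X, IsSolution g u x ∧ x m = a := by
  let x : ℤ → X := fun n ↦ n.inductionOn' m a (fun k _ b ↦ g (u k) b)
    (fun k hk b ↦ surjInv (hsurj (k - 1) (by lia)) b)
  have forward (n : ℤ) (hn : m ≤ n) : x (n + 1) = g (u n) (x n) := Int.inductionOn'_add_one hn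
  have backward (n : ℤ) (hn : n < m) : x n = surjInv (hsurj n hn) (x (n + 1)) := by
    obtain ⟨k, rfl⟩ : ∃ k, n = k - 1 := ⟨n + 1, by lia⟩
    rw [sub_add_cancel]
    exact Int.inductionOn'_sub_one (by lia)
  refine ⟨x, fun n ↦ ?_, Int.inductionOn'_self⟩
  rcases le_or_gt m n with hn | hn
  · exact forward n hn
  · rw [backward n hn, surjInv_eq (hsurj n hn)]

theorem stmt_19_general [Nontrivial X] {g : U → X → X} {u : ℤ → U}
    (hunique : {x | IsSolution g u x}.Subsingleton) (m : ℤ) :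
    ∃ n < m, ¬ Surjective (g (u n)) := by
  by_contra! hsurj
  obtain ⟨a, b, hab⟩ := exists_pair_ne X
  obtain ⟨x, hx, hxa⟩ := exists_isSolution_apply_eq_of_surjective hsurj a
  obtain ⟨y, hy, hyb⟩ := exists_isSolution_apply_eq_of_surjective hsurj b
  have hxy : x = y := hunique hx hy
  exact hab (by rw [← hxa, ← hyb, hxy])

/-- if `g` has the USP and `X` has more than one point, then `g(u, ·)` is
not surjective for any `u ∈ U`. -/
theorem stmt_19 [MetricSpace X] [CompactSpace X] [MetricSpace U]
    (g : U → X → X) (hg : Continuous fun p : U × X => g p.1 p.2)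
    (husp : USP g) (htwo : ∃ x y : X, x ≠ y) :
    ∀ u : U, ¬ Function.Surjective (g u) := by
  have : Nontrivial X := ⟨htwo⟩
  intro u hu
  obtain ⟨_, _, hns⟩ := stmt_19_general (fun _ hx _ hy ↦ (husp fun _ ↦ u).unique hx hy) 0
  exact hns hu
end
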